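/- arXiv:2206.04160 — 9 statements merged into one kernel-verified Lean document; each statement's English description precedes it below -/
import Mathlib

section
/- Let 𝒫 ⊆ ℝ^m and 𝒬 ⊆ ℝ^n be nonempty compact convex sets, A ∈ ℝ^{m×n}, and let (p_k)_{k≥0} ⊆ 𝒫 and (q_k)_{k≥0} ⊆ 𝒬 be arbitrary sequences. For K ≥ 1, define the regrets R_{1,K}(p) = Σ_{k=0}^{K-1} ((p_k+p_{k+1})/2)ᵀ A q_k − Σ_{k=0}^{K-1} pᵀ A q_k and R_{2,K}(q) = Σ_{k=0}^{K-1} p_{k+1}ᵀ A q − Σ_{k=0}^{K-1} p_{k+1}ᵀ A ((q_k+q_{k+1})/2), the total regret R_K = max_{(p,q)∈𝒫×𝒬} (R_{1,K}(p) + R_{2,K}(q)), and the average iterates p̄_K = (1/K) Σ_{k=0}^{K-1} p_{k+1}, q̄_K = (1/K) Σ_{k=0}^{K-1} q_k. Then the duality gap of the average iterates satisfies dg(p̄_K, q̄_K) = (1/K) R_K − (1/(2K)) (p₀ᵀ A q₀ − p_Kᵀ A q_K). -/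
open RealInnerProductSpace Matrix

/-- The duality gap `dg(p,q) = max_{q̃∈Q} pᵀ A q̃ − min_{p̃∈P} p̃ᵀ A q`. -/
noncomputable def dualityGap {m n : ℕ} (P : Set (EuclideanSpace ℝ (Fin m)))
    (Q : Set (EuclideanSpace ℝ (Fin n))) (A : Matrix (Fin m) (Fin n) ℝ)
    (p : EuclideanSpace ℝ (Fin m)) (q : EuclideanSpace ℝ (Fin n)) : ℝ :=
  sSup ((fun q' => ⟪p, Matrix.toEuclideanLin A q'⟫) '' Q) -
    sInf ((fun p' => ⟪p', Matrix.toEuclideanLin A q⟫) '' P)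

/-- Regret of the first player after `K` iterations with respect to a static action `p'`. -/
noncomputable def regret1 {m n : ℕ} (A : Matrix (Fin m) (Fin n) ℝ)
    (p : ℕ → EuclideanSpace ℝ (Fin m)) (q : ℕ → EuclideanSpace ℝ (Fin n)) (K : ℕ)
    (p' : EuclideanSpace ℝ (Fin m)) : ℝ :=
  ∑ k ∈ Finset.range K, ⟪(2:ℝ)⁻¹ • (p k + p (k+1)), Matrix.toEuclideanLin A (q k)⟫ -
    ∑ k ∈ Finset.range K, ⟪p', Matrix.toEuclideanLin A (q k)⟫

/-- Regret of the second player after `K` iterations with respect to a static action `q'`. -/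
noncomputable def regret2 {m n : ℕ} (A : Matrix (Fin m) (Fin n) ℝ)
    (p : ℕ → EuclideanSpace ℝ (Fin m)) (q : ℕ → EuclideanSpace ℝ (Fin n)) (K : ℕ)
    (q' : EuclideanSpace ℝ (Fin n)) : ℝ :=
  ∑ k ∈ Finset.range K, ⟪p (k+1), Matrix.toEuclideanLin A q'⟫ -
    ∑ k ∈ Finset.range K, ⟪p (k+1), Matrix.toEuclideanLin A ((2:ℝ)⁻¹ • (q k + q (k+1)))⟫

/-- The total regret `R_K = max_{(p,q)∈P×Q} (R_{1,K}(p) + R_{2,K}(q))`. -/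
noncomputable def totalRegret {m n : ℕ} (P : Set (EuclideanSpace ℝ (Fin m)))
    (Q : Set (EuclideanSpace ℝ (Fin n))) (A : Matrix (Fin m) (Fin n) ℝ)
    (p : ℕ → EuclideanSpace ℝ (Fin m)) (q : ℕ → EuclideanSpace ℝ (Fin n)) (K : ℕ) : ℝ :=
  sSup {r : ℝ | ∃ p' ∈ P, ∃ q' ∈ Q, r = regret1 A p q K p' + regret2 A p q K q'}

/-
The sums of the midpoint payoffs in the two regrets cancel up to a telescoping series, so
`R₁(p') + R₂(q')` equals `K * (p̄ᵀ A q' - p'ᵀ A q̄)` plus the constant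
`(p₀ᵀ A q₀ - p_Kᵀ A q_K) / 2`. The first part separates in `p'` and `q'`, and its supremum is
`K` times the duality gap.
-/

section Bilinear

variable {R M N G : Type*} [CommRing R] [AddCommGroup M] [Module R M] [AddCommGroup N] [Module R N]
  [AddCommGroup G] [Module R G]

theorem sum_range_bilin_smul_add_succ_sub (B : M →ₗ[R] N →ₗ[R] G) (c : R) (p : ℕ → M) (q : ℕ → N)
    (K : ℕ) :
    ∑ k ∈ Finset.range K, B (c • (p k + p (k + 1))) (q k) -
        ∑ k ∈ Finset.range K, B (p (k + 1)) (c • (q k + q (k + 1))) =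
      c • (B (p 0) (q 0) - B (p K) (q K)) := by
  have summand_eq (k : ℕ) :
      B (c • (p k + p (k + 1))) (q k) - B (p (k + 1)) (c • (q k + q (k + 1))) =
        c • (B (p k) (q k) - B (p (k + 1)) (q (k + 1))) := by
    simp only [map_smul, map_add, LinearMap.smul_apply, LinearMap.add_apply]
    module
  simp_rw [← Finset.sum_sub_distrib, summand_eq, ← Finset.smul_sum]
  rw [Finset.sum_range_sub' (fun k => B (p k) (q k))]

end Bilinear

theorem csSup_image_mul_add {s : Set ℝ} (hne : s.Nonempty) (hbdd : BddAbove s) {a : ℝ}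
    (ha : 0 ≤ a) (c : ℝ) : sSup ((fun x => a * x + c) '' s) = a * sSup s + c :=
  have affine_mono : Monotone fun x => a * x + c := (monotone_mul_left_of_nonneg ha).add_const c
  (affine_mono.map_csSup_of_continuousAt (by fun_prop) hne hbdd).symm

open scoped Pointwise in
theorem csSup_mul_sub_add {α β : Type*} {s : Set α} {t : Set β} {f : α → ℝ} {g : β → ℝ}
    (hs : s.Nonempty) (ht : t.Nonempty) (hf : BddBelow (f '' s)) (hg : BddAbove (g '' t)) {a : ℝ}
    (ha : 0 ≤ a) (c : ℝ) :
    sSup {r | ∃ x ∈ s, ∃ y ∈ t, r = a * (g y - f x) + c} =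
      a * (sSup (g '' t) - sInf (f '' s)) + c := by
  have values_eq : {r | ∃ x ∈ s, ∃ y ∈ t, r = a * (g y - f x) + c} =
      (fun z => a * z + c) '' (g '' t - f '' s) := by
    ext r
    constructor
    · rintro ⟨x, hx, y, hy, rfl⟩
      exact ⟨g y - f x, Set.sub_mem_sub ⟨y, hy, rfl⟩ ⟨x, hx, rfl⟩, rfl⟩
    · rintro ⟨_, ⟨_, ⟨y, hy, rfl⟩, _, ⟨x, hx, rfl⟩, rfl⟩, rfl⟩
      exact ⟨x, hx, y, hy, rfl⟩
  have sub_bddAbove : BddAbove (g '' t - f '' s) := by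
    rw [sub_eq_add_neg]
    exact hg.add hf.neg
  rw [values_eq, csSup_image_mul_add ((ht.image g).sub (hs.image f)) sub_bddAbove ha,
    csSup_sub (ht.image g) hg (hs.image f) hf]

section Regret

variable {m n : ℕ} {P : Set (EuclideanSpace ℝ (Fin m))} {Q : Set (EuclideanSpace ℝ (Fin n))}

theorem regret1_add_regret2 (A : Matrix (Fin m) (Fin n) ℝ)
    (p : ℕ → EuclideanSpace ℝ (Fin m)) (q : ℕ → EuclideanSpace ℝ (Fin n)) (K : ℕ)
    (p' : EuclideanSpace ℝ (Fin m)) (q' : EuclideanSpace ℝ (Fin n)) :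
    regret1 A p q K p' + regret2 A p q K q' =
      ⟪∑ k ∈ Finset.range K, p (k + 1), toEuclideanLin A q'⟫ -
        ⟪p', toEuclideanLin A (∑ k ∈ Finset.range K, q k)⟫ +
          2⁻¹ * (⟪p 0, toEuclideanLin A (q 0)⟫ - ⟪p K, toEuclideanLin A (q K)⟫) := by
  have telescope := sum_range_bilin_smul_add_succ_sub
    ((innerₗ _).compl₂ (toEuclideanLin A)) (2⁻¹ : ℝ) p q K
  simp only [LinearMap.compl₂_apply, innerₗ_apply_apply, smul_eq_mul] at telescope
  rw [regret1, regret2, ← telescope, sum_inner, map_sum, inner_sum]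
  ring

theorem regret1_add_regret2_eq_average {K : ℕ} (hK : K ≠ 0) (A : Matrix (Fin m) (Fin n) ℝ)
    (p : ℕ → EuclideanSpace ℝ (Fin m)) (q : ℕ → EuclideanSpace ℝ (Fin n))
    (p' : EuclideanSpace ℝ (Fin m)) (q' : EuclideanSpace ℝ (Fin n)) :
    regret1 A p q K p' + regret2 A p q K q' =
      K * (⟪(K : ℝ)⁻¹ • ∑ k ∈ Finset.range K, p (k + 1), toEuclideanLin A q'⟫ -
        ⟪p', toEuclideanLin A ((K : ℝ)⁻¹ • ∑ k ∈ Finset.range K, q k)⟫) +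
          2⁻¹ * (⟪p 0, toEuclideanLin A (q 0)⟫ - ⟪p K, toEuclideanLin A (q K)⟫) := by
  have hK' : (K : ℝ) ≠ 0 := Nat.cast_ne_zero.mpr hK
  rw [regret1_add_regret2, map_smul, real_inner_smul_left, real_inner_smul_right, ← mul_sub,
    mul_inv_cancel_left₀ hK']

theorem dualityGap_avg_eq_totalRegret_general (hPne : P.Nonempty) (hQne : Q.Nonempty)
    (A : Matrix (Fin m) (Fin n) ℝ)
    (p : ℕ → EuclideanSpace ℝ (Fin m)) (q : ℕ → EuclideanSpace ℝ (Fin n)) {K : ℕ} (hK : K ≠ 0)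
    (hP : BddBelow ((fun p' =>
      ⟪p', toEuclideanLin A ((K : ℝ)⁻¹ • ∑ k ∈ Finset.range K, q k)⟫) '' P))
    (hQ : BddAbove ((fun q' =>
      ⟪(K : ℝ)⁻¹ • ∑ k ∈ Finset.range K, p (k + 1), toEuclideanLin A q'⟫) '' Q)) :
    dualityGap P Q A ((K : ℝ)⁻¹ • ∑ k ∈ Finset.range K, p (k + 1))
        ((K : ℝ)⁻¹ • ∑ k ∈ Finset.range K, q k) =
      (K : ℝ)⁻¹ * totalRegret P Q A p q K -
        (2 * (K : ℝ))⁻¹ * (⟪p 0, toEuclideanLin A (q 0)⟫ - ⟪p K, toEuclideanLin A (q K)⟫) := by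
  have hK' : (K : ℝ) ≠ 0 := Nat.cast_ne_zero.mpr hK
  simp only [totalRegret, regret1_add_regret2_eq_average hK]
  rw [csSup_mul_sub_add hPne hQne hP hQ K.cast_nonneg, dualityGap]
  field_simp
  ring

end Regret

/-- **Total regret and duality gap of the average iterates.**
`dg(p̄_K, q̄_K) = (1/K) R_K − (1/(2K)) (p₀ᵀ A q₀ − p_Kᵀ A q_K)`. -/
theorem dualityGap_avg_eq_totalRegret {m n : ℕ}
    (P : Set (EuclideanSpace ℝ (Fin m))) (Q : Set (EuclideanSpace ℝ (Fin n)))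
    (hPne : P.Nonempty) (hPc : IsCompact P) (hPconv : Convex ℝ P)
    (hQne : Q.Nonempty) (hQc : IsCompact Q) (hQconv : Convex ℝ Q)
    (A : Matrix (Fin m) (Fin n) ℝ)
    (p : ℕ → EuclideanSpace ℝ (Fin m)) (q : ℕ → EuclideanSpace ℝ (Fin n))
    (hp : ∀ k, p k ∈ P) (hq : ∀ k, q k ∈ Q)
    (K : ℕ) (hK : 1 ≤ K) :
    dualityGap P Q A ((K:ℝ)⁻¹ • ∑ k ∈ Finset.range K, p (k+1))
        ((K:ℝ)⁻¹ • ∑ k ∈ Finset.range K, q k) =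
      (K:ℝ)⁻¹ * totalRegret P Q A p q K -
        (2 * (K:ℝ))⁻¹ * (⟪p 0, Matrix.toEuclideanLin A (q 0)⟫ -
          ⟪p K, Matrix.toEuclideanLin A (q K)⟫) := by
  exact dualityGap_avg_eq_totalRegret_general hPne hQne A p q (Nat.one_le_iff_ne_zero.mp hK)
    (hPc.bddBelow_image (by fun_prop))
    (hQc.bddAbove_image (by fun_prop))
end

section
/- Let m = n, let A ∈ ℝ^{n×n} be invertible with smallest singular value α_min > 0, and let H : ℝ^{2n} → ℝ be differentiable and μ-strongly convex with respect to the ℓ₂-norm, with minimizer z* = argmin H. If (z_k) follows the forward method z_{k+1} = z_k − η J ∇H(z_k) with J = [[0, A],[−Aᵀ, 0]] and step size η > 0, then for all k ≥ 0: H(z_k) − H(z*) ≥ (1 + η² α_min² μ²)^k (H(z₀) − H(z*)). -/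
open RealInnerProductSpace Matrix

/-!
Because `J` is skew, a forward step moves orthogonally to `∇H(z)`, so the linear term of the strong
convexity inequality vanishes and `H` grows by at least
`(μ/2) η² ‖J ∇H(z)‖² ≥ (μ/2) η² α² ‖∇H(z)‖²`.
The Polyak–Łojasiewicz inequality `‖∇H(z)‖² ≥ 2 μ (H(z) - H(z*))`, itself a consequence of strong
convexity, turns this growth into a factor `1 + η² α² μ²` on the energy gap.
-/

section StrongSubgradient

variable {E : Type*} [NormedAddCommGroup E] [InnerProductSpace ℝ E]

/-- `g` is a subgradient of `f` at `x` with modulus `μ`: `f` lies above the paraboloid of curvature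
`μ` through `(x, f x)` with slope `g`. A differentiable `f` is `μ`-strongly convex exactly when its
gradient has this property at every point. -/
def IsStrongSubgradientAt (μ : ℝ) (f : E → ℝ) (g x : E) : Prop :=
  ∀ y, f x + ⟪g, y - x⟫ + μ / 2 * ‖y - x‖ ^ 2 ≤ f y

namespace IsStrongSubgradientAt

variable {μ : ℝ} {f : E → ℝ} {g x : E}

theorem two_mul_sub_le_norm_sq (hg : IsStrongSubgradientAt μ f g x) (hμ : 0 ≤ μ) (y : E) :
    2 * μ * (f x - f y) ≤ ‖g‖ ^ 2 := by
  have complete_square : ‖g + μ • (y - x)‖ ^ 2 =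
      ‖g‖ ^ 2 + 2 * μ * (⟪g, y - x⟫ + μ / 2 * ‖y - x‖ ^ 2) := by
    rw [norm_add_sq_real, real_inner_smul_right, norm_smul, mul_pow, Real.norm_eq_abs, sq_abs]
    ring
  have gap_le : f x - f y ≤ -(⟪g, y - x⟫ + μ / 2 * ‖y - x‖ ^ 2) := by linarith [hg y]
  calc 2 * μ * (f x - f y)
      ≤ 2 * μ * -(⟪g, y - x⟫ + μ / 2 * ‖y - x‖ ^ 2) := by gcongr
    _ = ‖g‖ ^ 2 - ‖g + μ • (y - x)‖ ^ 2 := by rw [complete_square]; ring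
    _ ≤ ‖g‖ ^ 2 := sub_le_self _ (sq_nonneg _)

theorem add_norm_sq_le_of_inner_eq_zero (hg : IsStrongSubgradientAt μ f g x) {d : E}
    (hd : ⟪g, d⟫ = 0) (η : ℝ) : f x + μ / 2 * (η ^ 2 * ‖d‖ ^ 2) ≤ f (x - η • d) := by
  have h := hg (x - η • d)
  rwa [sub_sub_cancel_left, inner_neg_right, real_inner_smul_right, hd, mul_zero, neg_zero,
    add_zero, norm_neg, norm_smul, mul_pow, Real.norm_eq_abs, sq_abs] at h

theorem mul_sub_le_sub_of_inner_eq_zero (hg : IsStrongSubgradientAt μ f g x) (hμ : 0 ≤ μ)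
    {α : ℝ} (hα : 0 ≤ α) {d : E} (hd : ⟪g, d⟫ = 0) (hgd : α * ‖g‖ ≤ ‖d‖) (η : ℝ) (y : E) :
    (1 + η ^ 2 * α ^ 2 * μ ^ 2) * (f x - f y) ≤ f (x - η • d) - f y := by
  calc (1 + η ^ 2 * α ^ 2 * μ ^ 2) * (f x - f y)
      = f x - f y + μ / 2 * (η ^ 2 * (α ^ 2 * (2 * μ * (f x - f y)))) := by ring
    _ ≤ f x - f y + μ / 2 * (η ^ 2 * (α ^ 2 * ‖g‖ ^ 2)) := by
      gcongr
      exact hg.two_mul_sub_le_norm_sq hμ y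
    _ = f x - f y + μ / 2 * (η ^ 2 * (α * ‖g‖) ^ 2) := by rw [mul_pow]
    _ ≤ f x - f y + μ / 2 * (η ^ 2 * ‖d‖ ^ 2) := by gcongr
    _ ≤ f (x - η • d) - f y := by linarith [hg.add_norm_sq_le_of_inner_eq_zero hd η]

end IsStrongSubgradientAt

theorem forward_method_energy_increase_strongly_convex_general {J : E → E} {α : ℝ} (hα : 0 ≤ α)
    (hJ_orth : ∀ v, ⟪v, J v⟫ = 0) (hJ_norm : ∀ v, α * ‖v‖ ≤ ‖J v‖) {H : E → ℝ} {g : E → E}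
    {μ : ℝ} (hμ : 0 ≤ μ) (hg : ∀ w, IsStrongSubgradientAt μ H (g w) w) {η : ℝ} {z : ℕ → E}
    (hz : ∀ k, z (k + 1) = z k - η • J (g (z k))) (w : E) (k : ℕ) :
    (1 + η ^ 2 * α ^ 2 * μ ^ 2) ^ k * (H (z 0) - H w) ≤ H (z k) - H w := by
  refine geom_le (u := fun k ↦ H (z k) - H w) (by positivity) k fun j _ ↦ ?_
  rw [hz j]
  exact (hg (z j)).mul_sub_le_sub_of_inner_eq_zero hμ hα (hJ_orth _) (hJ_norm _) η w

end StrongSubgradient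

section SkewBlockMatrix

variable {ι κ : Type*}

theorem transpose_fromBlocks_zero_neg_transpose {R : Type*} [AddGroup R] (A : Matrix ι κ R) :
    (fromBlocks 0 A (-Aᵀ) 0)ᵀ = -fromBlocks 0 A (-Aᵀ) 0 := by
  simp [fromBlocks_transpose, fromBlocks_neg]

variable [Fintype ι] [Fintype κ]

theorem inner_toEuclideanLin_self_of_transpose_eq_neg [DecidableEq ι] {M : Matrix ι ι ℝ}
    (hM : Mᵀ = -M) (v : EuclideanSpace ℝ ι) : ⟪v, toEuclideanLin M v⟫ = 0 := by
  have inner_eq_neg : ⟪v, toEuclideanLin M v⟫ = -⟪v, toEuclideanLin M v⟫ := by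
    calc ⟪v, toEuclideanLin M v⟫ = ⟪toEuclideanLin Mᵀ v, v⟫ := by
          rw [← conjTranspose_eq_transpose_of_trivial, toEuclideanLin_conjTranspose_eq_adjoint,
            LinearMap.adjoint_inner_left]
      _ = -⟪v, toEuclideanLin M v⟫ := by
          rw [hM, map_neg, LinearMap.neg_apply, inner_neg_left, real_inner_comm]
  linarith

variable {𝕜 : Type*} [RCLike 𝕜]

theorem norm_toLp_sumElim_sq (u : ι → 𝕜) (v : κ → 𝕜) :
    ‖WithLp.toLp 2 (Sum.elim u v)‖ ^ 2 = ‖WithLp.toLp 2 u‖ ^ 2 + ‖WithLp.toLp 2 v‖ ^ 2 := by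
  simp [EuclideanSpace.norm_sq_eq]

theorem mul_norm_le_norm_toEuclideanLin_fromBlocks [DecidableEq ι] [DecidableEq κ]
    {A : Matrix ι κ 𝕜} {B : Matrix κ ι 𝕜} {α : ℝ} (hα : 0 ≤ α)
    (hA : ∀ v, α * ‖v‖ ≤ ‖toEuclideanLin A v‖) (hB : ∀ v, α * ‖v‖ ≤ ‖toEuclideanLin B v‖)
    (v : EuclideanSpace 𝕜 (ι ⊕ κ)) : α * ‖v‖ ≤ ‖toEuclideanLin (fromBlocks 0 A B 0) v‖ := by
  obtain ⟨x, y, rfl⟩ : ∃ x y, v = WithLp.toLp 2 (Sum.elim x y) :=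
    ⟨v ∘ Sum.inl, v ∘ Sum.inr, by rw [Sum.elim_comp_inl_inr]⟩
  have image_eq : toEuclideanLin (fromBlocks 0 A B 0) (WithLp.toLp 2 (Sum.elim x y)) =
      WithLp.toLp 2 (Sum.elim (A *ᵥ y) (B *ᵥ x)) := by
    simp [toLpLin_toLp, fromBlocks_mulVec]
  refine le_of_sq_le_sq ?_ (norm_nonneg _)
  calc (α * ‖WithLp.toLp 2 (Sum.elim x y)‖) ^ 2
      = (α * ‖WithLp.toLp 2 y‖) ^ 2 + (α * ‖WithLp.toLp 2 x‖) ^ 2 := by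
        rw [mul_pow, norm_toLp_sumElim_sq]; ring
    _ ≤ ‖toEuclideanLin A (WithLp.toLp 2 y)‖ ^ 2 + ‖toEuclideanLin B (WithLp.toLp 2 x)‖ ^ 2 := by
        gcongr
        exacts [hA _, hB _]
    _ = ‖toEuclideanLin (fromBlocks 0 A B 0) (WithLp.toLp 2 (Sum.elim x y))‖ ^ 2 := by
        rw [image_eq, norm_toLp_sumElim_sq, toLpLin_toLp, toLpLin_toLp,
          toLin'_apply, toLin'_apply]

end SkewBlockMatrix

/-- **The forward method increases the energy exponentially fast for strongly convex `H`.**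
If `A` is invertible with smallest singular value `α_min > 0` and `H` is `μ`-strongly convex,
then along `z_{k+1} = z_k − η J ∇H(z_k)` one has
`H(z_k) − H(z*) ≥ (1 + η² α_min² μ²)^k (H(z₀) − H(z*))`. -/
theorem forward_method_energy_increase_strongly_convex {n : ℕ}
    (A : Matrix (Fin n) (Fin n) ℝ) (hAunit : IsUnit A)
    (αmin : ℝ) (hαmin : 0 < αmin)
    -- `αmin` is (a lower bound for) the smallest singular value of `A`
    (hA : ∀ v : EuclideanSpace ℝ (Fin n), αmin * ‖v‖ ≤ ‖Matrix.toEuclideanLin A v‖)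
    (hAT : ∀ v : EuclideanSpace ℝ (Fin n), αmin * ‖v‖ ≤ ‖Matrix.toEuclideanLin Aᵀ v‖)
    (H : EuclideanSpace ℝ (Fin n ⊕ Fin n) → ℝ) (hH : Differentiable ℝ H)
    (μ : ℝ) (hμ : 0 < μ)
    -- `H` is `μ`-strongly convex with respect to the `ℓ₂`-norm
    (hsc : ∀ w w', H w + ⟪gradient H w, w' - w⟫ + μ / 2 * ‖w' - w‖ ^ 2 ≤ H w')
    (zstar : EuclideanSpace ℝ (Fin n ⊕ Fin n)) (hmin : ∀ w, H zstar ≤ H w)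
    (η : ℝ) (hη : 0 < η)
    (z : ℕ → EuclideanSpace ℝ (Fin n ⊕ Fin n))
    (hz : ∀ k, z (k+1) = z k -
      η • Matrix.toEuclideanLin (Matrix.fromBlocks 0 A (-Aᵀ) 0) (gradient H (z k))) :
    ∀ k : ℕ, (1 + η ^ 2 * αmin ^ 2 * μ ^ 2) ^ k * (H (z 0) - H zstar) ≤ H (z k) - H zstar := by
  exact forward_method_energy_increase_strongly_convex_general hαmin.le
    (inner_toEuclideanLin_self_of_transpose_eq_neg (transpose_fromBlocks_zero_neg_transpose A))
    (mul_norm_le_norm_toEuclideanLin_fromBlocks hαmin.le hA (by simpa using hAT)) hμ.le hsc hz zstar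
end

section
/- Let H : ℝ^{m+n} → ℝ be convex, differentiable, and L₂-smooth with respect to the ℓ₂-norm (∇H is L₂-Lipschitz), with a minimizer z* = argmin H. Let α_max be the maximum singular value of A ∈ ℝ^{m×n} and J = [[0, A],[−Aᵀ, 0]]. If (z_k) follows the forward method z_{k+1} = z_k − η J ∇H(z_k) with step size η > 0, then for all k ≥ 0: H(z_k) − H(z*) ≤ (1 + η² α_max² L₂²)^k (H(z₀) − H(z*)). -/
open RealInnerProductSpace Matrix

/-!
Since `J` is skew, `J ∇H(z)` is orthogonal to `∇H(z)`, so the first-order term of the descent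
inequality vanishes along a forward step and the energy grows by at most
`(L₂ / 2) η² α_max² ‖∇H(z)‖²`. Along the line through `z` in direction `∇H(z)`, the descent
inequality bounds `H - H(z*) ≥ 0` above by a quadratic, whose discriminant is therefore nonpositive:
`‖∇H(z)‖² ≤ 2 L₂ (H(z) - H(z*))`. Hence each step multiplies the energy gap by at most
`1 + η² α_max² L₂²`.
-/

section Smooth

variable {E : Type*} [NormedAddCommGroup E] [InnerProductSpace ℝ E] [CompleteSpace E]
  {H : E → ℝ} {L c : ℝ}

lemma hasDerivAt_comp_add_smul {x v : E} {t : ℝ} (hH : DifferentiableAt ℝ H (x + t • v)) :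
    HasDerivAt (fun s : ℝ ↦ H (x + s • v)) ⟪gradient H (x + t • v), v⟫ t := by
  have hline : HasDerivAt (fun s : ℝ ↦ x + s • v) v t := by
    simpa using ((hasDerivAt_id t).smul_const v).const_add x
  rw [inner_gradient_left]
  exact hH.hasFDerivAt.comp_hasDerivAt t hline

lemma inner_gradient_add_smul_le
    (hsmooth : ∀ w w', ‖gradient H w - gradient H w'‖ ≤ L * ‖w - w'‖) (x v : E) {t : ℝ}
    (ht : 0 ≤ t) :
    ⟪gradient H (x + t • v), v⟫ ≤ ⟪gradient H x, v⟫ + L * t * ‖v‖ ^ 2 := by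
  have hgrad : ‖gradient H (x + t • v) - gradient H x‖ ≤ L * (t * ‖v‖) := by
    simpa [norm_smul, abs_of_nonneg ht] using hsmooth (x + t • v) x
  calc ⟪gradient H (x + t • v), v⟫
      = ⟪gradient H x, v⟫ + ⟪gradient H (x + t • v) - gradient H x, v⟫ := by
        rw [inner_sub_left]; ring
    _ ≤ ⟪gradient H x, v⟫ + ‖gradient H (x + t • v) - gradient H x‖ * ‖v‖ := by
        gcongr; exact real_inner_le_norm _ _
    _ ≤ ⟪gradient H x, v⟫ + L * (t * ‖v‖) * ‖v‖ := by gcongr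
    _ = ⟪gradient H x, v⟫ + L * t * ‖v‖ ^ 2 := by ring

lemma apply_add_le_of_lipschitz_gradient (hH : Differentiable ℝ H)
    (hsmooth : ∀ w w', ‖gradient H w - gradient H w'‖ ≤ L * ‖w - w'‖) (x v : E) :
    H (x + v) ≤ H x + ⟪gradient H x, v⟫ + L / 2 * ‖v‖ ^ 2 := by
  let model (t : ℝ) : ℝ := H x + t * ⟪gradient H x, v⟫ + L / 2 * t ^ 2 * ‖v‖ ^ 2
  have hline (t : ℝ) := hasDerivAt_comp_add_smul (hH (x + t • v))
  have hmodel (t : ℝ) : HasDerivAt model (⟪gradient H x, v⟫ + L * t * ‖v‖ ^ 2) t := by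
    refine ((((hasDerivAt_id t).mul_const _).const_add (H x)).add
      ((((hasDerivAt_id t).pow 2).const_mul (L / 2)).mul_const (‖v‖ ^ 2))).congr_deriv ?_
    simp only [id]
    ring
  have hle : H (x + (1 : ℝ) • v) ≤ model 1 :=
    image_le_of_deriv_right_le_deriv_boundary
      (fun t _ ↦ (hline t).continuousAt.continuousWithinAt)
      (fun t _ ↦ (hline t).hasDerivWithinAt)
      (by simp [model])
      (fun t _ ↦ (hmodel t).continuousAt.continuousWithinAt)
      (fun t _ ↦ (hmodel t).hasDerivWithinAt)
      (fun t ht ↦ inner_gradient_add_smul_le hsmooth x v ht.1)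
      (Set.right_mem_Icc.2 zero_le_one)
  simpa [model] using hle

lemma norm_gradient_sq_le_of_lower_bound (hH : Differentiable ℝ H) (hL : 0 ≤ L)
    (hsmooth : ∀ w w', ‖gradient H w - gradient H w'‖ ≤ L * ‖w - w'‖) (hc : ∀ w, c ≤ H w)
    (x : E) : ‖gradient H x‖ ^ 2 ≤ 2 * L * (H x - c) := by
  rcases (sq_nonneg ‖gradient H x‖).eq_or_lt with hzero | hpos
  · have := sub_nonneg.2 (hc x)
    rw [← hzero]
    positivity
  have hquad (t : ℝ) :
      0 ≤ L / 2 * ‖gradient H x‖ ^ 2 * (t * t) + ‖gradient H x‖ ^ 2 * t + (H x - c) := by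
    have hdescent := (hc _).trans
      (apply_add_le_of_lipschitz_gradient hH hsmooth x (t • gradient H x))
    rw [inner_smul_right, real_inner_self_eq_norm_sq, norm_smul, mul_pow, Real.norm_eq_abs,
      sq_abs] at hdescent
    linarith
  have hdiscrim := discrim_le_zero hquad
  rw [discrim] at hdiscrim
  exact le_of_mul_le_mul_right (by linarith) hpos

lemma forward_step_sub_le (hH : Differentiable ℝ H)
    (hsmooth : ∀ w w', ‖gradient H w - gradient H w'‖ ≤ L * ‖w - w'‖) (hc : ∀ w, c ≤ H w)
    {x d : E} {α : ℝ} (horth : ⟪gradient H x, d⟫ = 0) (hd : ‖d‖ ≤ α * ‖gradient H x‖) (η : ℝ) :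
    H (x - η • d) - c ≤ (1 + η ^ 2 * α ^ 2 * L ^ 2) * (H x - c) := by
  have hgap : 0 ≤ H x - c := sub_nonneg.2 (hc x)
  have hdescent : H (x - η • d) ≤ H x + L / 2 * (η ^ 2 * ‖d‖ ^ 2) := by
    simpa [← sub_eq_add_neg, inner_smul_right, horth, norm_smul, mul_pow] using
      apply_add_le_of_lipschitz_gradient hH hsmooth x (-(η • d))
  have hquad : L / 2 * (η ^ 2 * ‖d‖ ^ 2) ≤ η ^ 2 * α ^ 2 * L ^ 2 * (H x - c) := by
    rcases le_total L 0 with hL | hL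
    · calc L / 2 * (η ^ 2 * ‖d‖ ^ 2) ≤ 0 :=
            mul_nonpos_of_nonpos_of_nonneg (by linarith) (by positivity)
        _ ≤ η ^ 2 * α ^ 2 * L ^ 2 * (H x - c) := by positivity
    · calc L / 2 * (η ^ 2 * ‖d‖ ^ 2)
          ≤ L / 2 * (η ^ 2 * (α * ‖gradient H x‖) ^ 2) := by gcongr
        _ = L / 2 * (η ^ 2 * α ^ 2 * ‖gradient H x‖ ^ 2) := by ring
        _ ≤ L / 2 * (η ^ 2 * α ^ 2 * (2 * L * (H x - c))) := by
            gcongr; exact norm_gradient_sq_le_of_lower_bound hH hL hsmooth hc x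
        _ = η ^ 2 * α ^ 2 * L ^ 2 * (H x - c) := by ring
  linarith

theorem forward_method_energy_increase_smooth_general (hH : Differentiable ℝ H)
    (hsmooth : ∀ w w', ‖gradient H w - gradient H w'‖ ≤ L * ‖w - w'‖) (hc : ∀ w, c ≤ H w)
    {J : E → E} {α : ℝ} (hskew : ∀ v, ⟪v, J v⟫ = 0) (hJ : ∀ v, ‖J v‖ ≤ α * ‖v‖)
    {η : ℝ} {z : ℕ → E} (hz : ∀ k, z (k + 1) = z k - η • J (gradient H (z k))) (k : ℕ) :
    H (z k) - c ≤ (1 + η ^ 2 * α ^ 2 * L ^ 2) ^ k * (H (z 0) - c) := by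
  refine le_geom (u := fun k ↦ H (z k) - c) (by positivity) k fun j _ ↦ ?_
  simpa only [hz j] using forward_step_sub_le hH hsmooth hc (hskew _) (hJ _) η

end Smooth

section BlockMatrix

variable {𝕜 l m n o : Type*} [RCLike 𝕜] [Fintype l] [Fintype m] [Fintype n] [Fintype o]

lemma norm_toLp_sumElim_sq_s6 (a : m → 𝕜) (b : n → 𝕜) :
    ‖WithLp.toLp 2 (Sum.elim a b)‖ ^ 2 = ‖WithLp.toLp 2 a‖ ^ 2 + ‖WithLp.toLp 2 b‖ ^ 2 := by
  simp [EuclideanSpace.norm_sq_eq]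

variable [DecidableEq l] [DecidableEq n]

lemma inner_toEuclideanLin_self_eq_zero {S : Matrix n n ℝ} (hS : Sᵀ = -S)
    (v : EuclideanSpace ℝ n) : ⟪v, toEuclideanLin S v⟫ = 0 := by
  have hneg : ⟪v, toEuclideanLin S v⟫ = -⟪v, toEuclideanLin S v⟫ := by
    calc ⟪v, toEuclideanLin S v⟫
        = ⟪toEuclideanLin Sᵀ v, v⟫ := by
          rw [← conjTranspose_eq_transpose_of_trivial, toEuclideanLin_conjTranspose_eq_adjoint,
            LinearMap.adjoint_inner_left]
      _ = -⟪v, toEuclideanLin S v⟫ := by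
          rw [hS, map_neg, LinearMap.neg_apply, inner_neg_left, real_inner_comm]
  linarith

lemma norm_toEuclideanLin_fromBlocks_antidiagonal_le {A : Matrix m n 𝕜} {B : Matrix o l 𝕜}
    {α : ℝ} (hα : 0 ≤ α) (hA : ∀ v, ‖toEuclideanLin A v‖ ≤ α * ‖v‖)
    (hB : ∀ v, ‖toEuclideanLin B v‖ ≤ α * ‖v‖) (v : EuclideanSpace 𝕜 (l ⊕ n)) :
    ‖toEuclideanLin (fromBlocks 0 A B 0) v‖ ≤ α * ‖v‖ := by
  obtain ⟨a, b, rfl⟩ : ∃ a b, v = WithLp.toLp 2 (Sum.elim a b) :=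
    ⟨v.ofLp ∘ Sum.inl, v.ofLp ∘ Sum.inr, by simp⟩
  have happly : toEuclideanLin (fromBlocks 0 A B 0) (WithLp.toLp 2 (Sum.elim a b)) =
      WithLp.toLp 2 (Sum.elim (A *ᵥ b) (B *ᵥ a)) := by
    simp [toLpLin_toLp, fromBlocks_mulVec]
  refine le_of_sq_le_sq ?_ (by positivity)
  calc ‖toEuclideanLin (fromBlocks 0 A B 0) (WithLp.toLp 2 (Sum.elim a b))‖ ^ 2
      = ‖WithLp.toLp 2 (A *ᵥ b)‖ ^ 2 + ‖WithLp.toLp 2 (B *ᵥ a)‖ ^ 2 := by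
        rw [happly, norm_toLp_sumElim_sq_s6]
    _ ≤ (α * ‖WithLp.toLp 2 b‖) ^ 2 + (α * ‖WithLp.toLp 2 a‖) ^ 2 := by
        gcongr
        · exact hA (WithLp.toLp 2 b)
        · exact hB (WithLp.toLp 2 a)
    _ = (α * ‖WithLp.toLp 2 (Sum.elim a b)‖) ^ 2 := by
        rw [mul_pow _ ‖WithLp.toLp 2 (Sum.elim a b)‖, norm_toLp_sumElim_sq_s6]; ring

end BlockMatrix

/-- **The forward method increases the energy at most exponentially fast for smooth convex `H`.**
If `H` is convex and `L₂`-smooth, then along `z_{k+1} = z_k − η J ∇H(z_k)` one has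
`H(z_k) − H(z*) ≤ (1 + η² α_max² L₂²)^k (H(z₀) − H(z*))`. -/
theorem forward_method_energy_increase_smooth {m n : ℕ}
    (A : Matrix (Fin m) (Fin n) ℝ)
    (αmax : ℝ) (hαmax : 0 ≤ αmax)
    -- `αmax` is (an upper bound for) the maximum singular value of `A`
    (hA : ∀ v : EuclideanSpace ℝ (Fin n), ‖Matrix.toEuclideanLin A v‖ ≤ αmax * ‖v‖)
    (hAT : ∀ v : EuclideanSpace ℝ (Fin m), ‖Matrix.toEuclideanLin Aᵀ v‖ ≤ αmax * ‖v‖)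
    (H : EuclideanSpace ℝ (Fin m ⊕ Fin n) → ℝ)
    (hH : Differentiable ℝ H) (hconv : ConvexOn ℝ Set.univ H)
    (L₂ : ℝ)
    -- `H` is `L₂`-smooth with respect to the `ℓ₂`-norm
    (hsmooth : ∀ w w', ‖gradient H w - gradient H w'‖ ≤ L₂ * ‖w - w'‖)
    (zstar : EuclideanSpace ℝ (Fin m ⊕ Fin n)) (hmin : ∀ w, H zstar ≤ H w)
    (η : ℝ) (hη : 0 < η)
    (z : ℕ → EuclideanSpace ℝ (Fin m ⊕ Fin n))
    (hz : ∀ k, z (k+1) = z k -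
      η • Matrix.toEuclideanLin (Matrix.fromBlocks 0 A (-Aᵀ) 0) (gradient H (z k))) :
    ∀ k : ℕ, H (z k) - H zstar ≤ (1 + η ^ 2 * αmax ^ 2 * L₂ ^ 2) ^ k * (H (z 0) - H zstar) := by
  have hneg (v) : ‖toEuclideanLin (-Aᵀ) v‖ ≤ αmax * ‖v‖ := by simpa using hAT v
  exact forward_method_energy_increase_smooth_general hH hsmooth hmin
    (inner_toEuclideanLin_self_eq_zero (by simp [fromBlocks_transpose, fromBlocks_neg]))
    (norm_toEuclideanLin_fromBlocks_antidiagonal_le hαmax hA hneg) hz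
end

section
/- Let H : ℝ^{m+n} → ℝ be differentiable and L₂-smooth with respect to the ℓ₂-norm, let α_max be the maximum singular value of A ∈ ℝ^{m×n}, and let J = [[0, A],[−Aᵀ, 0]]. If 0 < η < 1/(α_max L₂), then the backward method is well defined: for every z ∈ ℝ^{m+n} there exists a unique z' ∈ ℝ^{m+n} satisfying z' = z − η J ∇H(z'). -/
open RealInnerProductSpace Matrix

/-! A bound `α` on the operator norm of `A` also bounds that of `Aᴴ`. As `J = [[0, A], [-Aᴴ, 0]]`
sends the two orthogonal coordinate blocks to orthogonal blocks, `α` bounds the norm of `J` too.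
Hence `w ↦ z - η J F(w)` is a contraction as soon as `‖η‖ α L < 1`, where `L` is a Lipschitz
constant of the vector field `F`, and the solutions `z'` are its fixed points. -/

theorem existsUnique_eq_of_contractingWith {X : Type*} [MetricSpace X] [CompleteSpace X]
    [Nonempty X] {K : NNReal} {f : X → X} (hf : ContractingWith K f) : ∃! x, x = f x :=
  ⟨hf.fixedPoint, hf.fixedPoint_isFixedPt.symm, fun _ hy => hf.fixedPoint_unique hy.symm⟩

theorem existsUnique_eq_sub_smul_map {𝕜 V E : Type*} [NormedField 𝕜] [SeminormedAddCommGroup V]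
    [Module 𝕜 V] [NormedAddCommGroup E] [NormedSpace 𝕜 E] [CompleteSpace E]
    {J : V →ₗ[𝕜] E} {α : ℝ} (hα : 0 ≤ α) (hJ : ∀ v, ‖J v‖ ≤ α * ‖v‖)
    {F : E → V} {L : ℝ} (hF : ∀ w w', ‖F w - F w'‖ ≤ L * ‖w - w'‖)
    {η : 𝕜} (hη : ‖η‖ * (α * L) < 1) (z : E) : ∃! z', z' = z - η • J (F z') := by
  have lipschitz_step : ∀ w w', dist (z - η • J (F w)) (z - η • J (F w')) ≤
      ‖η‖ * (α * L) * dist w w' := fun w w' => calc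
    dist (z - η • J (F w)) (z - η • J (F w')) = ‖η‖ * ‖J (F w - F w')‖ := by
      rw [dist_sub_left, dist_eq_norm, ← smul_sub, ← map_sub, norm_smul]
    _ ≤ ‖η‖ * (α * (L * ‖w - w'‖)) := by
      gcongr
      exact (hJ _).trans (by gcongr; exact hF w w')
    _ = ‖η‖ * (α * L) * dist w w' := by rw [dist_eq_norm]; ring
  exact existsUnique_eq_of_contractingWith
    ⟨Real.toNNReal_lt_one.2 hη, LipschitzWith.of_dist_le' lipschitz_step⟩

section RCLike

variable {𝕜 : Type*} [RCLike 𝕜]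

theorem norm_adjoint_apply_le {V W : Type*} [NormedAddCommGroup V] [InnerProductSpace 𝕜 V]
    [FiniteDimensional 𝕜 V] [NormedAddCommGroup W] [InnerProductSpace 𝕜 W] [FiniteDimensional 𝕜 W]
    {T : V →ₗ[𝕜] W} {α : ℝ} (hα : 0 ≤ α) (hT : ∀ v, ‖T v‖ ≤ α * ‖v‖) (w : W) :
    ‖T.adjoint w‖ ≤ α * ‖w‖ := by
  have := FiniteDimensional.complete 𝕜 V
  have := FiniteDimensional.complete 𝕜 W
  have opNorm_le : ‖ContinuousLinearMap.adjoint T.toContinuousLinearMap‖ ≤ α := by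
    rw [LinearIsometryEquiv.norm_map]
    exact ContinuousLinearMap.opNorm_le_bound _ hα hT
  exact ContinuousLinearMap.le_of_opNorm_le _ opNorm_le w

variable {ι κ : Type*} [Fintype ι] [Fintype κ]

theorem norm_sq_toLp_sumElim {E : Type*} [SeminormedAddCommGroup E] (x : ι → E) (y : κ → E) :
    ‖WithLp.toLp 2 (Sum.elim x y)‖ ^ 2 = ‖WithLp.toLp 2 x‖ ^ 2 + ‖WithLp.toLp 2 y‖ ^ 2 := by
  simp only [PiLp.norm_sq_eq_of_L2, Fintype.sum_sum_type, Sum.elim_inl, Sum.elim_inr]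

theorem norm_toEuclideanLin_fromBlocks_zero_diag_le {ι' κ' : Type*} [Fintype ι'] [Fintype κ']
    [DecidableEq ι'] [DecidableEq κ'] {B : Matrix ι κ' 𝕜} {C : Matrix κ ι' 𝕜}
    {α : ℝ} (hα : 0 ≤ α) (hB : ∀ y, ‖toEuclideanLin B y‖ ≤ α * ‖y‖)
    (hC : ∀ x, ‖toEuclideanLin C x‖ ≤ α * ‖x‖) (v : EuclideanSpace 𝕜 (ι' ⊕ κ')) :
    ‖toEuclideanLin (fromBlocks 0 B C 0) v‖ ≤ α * ‖v‖ := by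
  obtain ⟨x, y, rfl⟩ : ∃ x y, v = WithLp.toLp 2 (Sum.elim x y) :=
    ⟨v ∘ Sum.inl, v ∘ Sum.inr, by rw [Sum.elim_comp_inl_inr]⟩
  refine le_of_sq_le_sq ?_ (by positivity)
  calc ‖toEuclideanLin (fromBlocks 0 B C 0) (WithLp.toLp 2 (Sum.elim x y))‖ ^ 2
      = ‖toEuclideanLin B (WithLp.toLp 2 y)‖ ^ 2 + ‖toEuclideanLin C (WithLp.toLp 2 x)‖ ^ 2 := by
        simp only [toLpLin_apply, fromBlocks_mulVec, Sum.elim_comp_inl, Sum.elim_comp_inr,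
          zero_mulVec, zero_add, add_zero, norm_sq_toLp_sumElim]
    _ ≤ (α * ‖WithLp.toLp 2 y‖) ^ 2 + (α * ‖WithLp.toLp 2 x‖) ^ 2 := by
        gcongr
        exacts [hB _, hC _]
    _ = (α * ‖WithLp.toLp 2 (Sum.elim x y)‖) ^ 2 := by
        rw [mul_pow, mul_pow, mul_pow, norm_sq_toLp_sumElim]; ring

variable [DecidableEq ι] [DecidableEq κ]

theorem norm_toEuclideanLin_fromBlocks_neg_conjTranspose_le {A : Matrix ι κ 𝕜} {α : ℝ}
    (hα : 0 ≤ α) (hA : ∀ v, ‖toEuclideanLin A v‖ ≤ α * ‖v‖) (v : EuclideanSpace 𝕜 (ι ⊕ κ)) :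
    ‖toEuclideanLin (fromBlocks 0 A (-Aᴴ) 0) v‖ ≤ α * ‖v‖ := by
  refine norm_toEuclideanLin_fromBlocks_zero_diag_le hα hA (fun x => ?_) v
  rw [map_neg, LinearMap.neg_apply, norm_neg, toEuclideanLin_conjTranspose_eq_adjoint]
  exact norm_adjoint_apply_le hα hA x

theorem backward_method_well_defined_general
    {A : Matrix ι κ 𝕜} {α : ℝ} (hα : 0 ≤ α) (hA : ∀ v, ‖toEuclideanLin A v‖ ≤ α * ‖v‖)
    {F : EuclideanSpace 𝕜 (ι ⊕ κ) → EuclideanSpace 𝕜 (ι ⊕ κ)} {L : ℝ}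
    (hF : ∀ w w', ‖F w - F w'‖ ≤ L * ‖w - w'‖) {η : 𝕜} (hη : ‖η‖ * (α * L) < 1)
    (z : EuclideanSpace 𝕜 (ι ⊕ κ)) :
    ∃! z', z' = z - η • toEuclideanLin (fromBlocks 0 A (-Aᴴ) 0) (F z') :=
  existsUnique_eq_sub_smul_map hα (norm_toEuclideanLin_fromBlocks_neg_conjTranspose_le hα hA) hF
    hη z

end RCLike

/-- **Well-posedness of the backward discretization of the skew-gradient flow.**
If `H` is `L₂`-smooth and `0 < η < 1/(α_max L₂)`, then for every `z` there exists a unique `z'`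
with `z' = z − η J ∇H(z')`, where `J = [[0, A], [−Aᵀ, 0]]`. -/
theorem backward_method_well_defined {m n : ℕ}
    (A : Matrix (Fin m) (Fin n) ℝ)
    (αmax : ℝ) (hαmax : 0 ≤ αmax)
    -- `αmax` is (an upper bound for) the maximum singular value of `A`
    (hA : ∀ v : EuclideanSpace ℝ (Fin n), ‖Matrix.toEuclideanLin A v‖ ≤ αmax * ‖v‖)
    (hAT : ∀ v : EuclideanSpace ℝ (Fin m), ‖Matrix.toEuclideanLin Aᵀ v‖ ≤ αmax * ‖v‖)
    (H : EuclideanSpace ℝ (Fin m ⊕ Fin n) → ℝ) (hH : Differentiable ℝ H)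
    (L₂ : ℝ)
    -- `H` is `L₂`-smooth with respect to the `ℓ₂`-norm
    (hsmooth : ∀ w w', ‖gradient H w - gradient H w'‖ ≤ L₂ * ‖w - w'‖)
    (η : ℝ) (hη : 0 < η) (hηsmall : η * (αmax * L₂) < 1) :
    ∀ z : EuclideanSpace ℝ (Fin m ⊕ Fin n), ∃! z' : EuclideanSpace ℝ (Fin m ⊕ Fin n),
      z' = z - η • Matrix.toEuclideanLin (Matrix.fromBlocks 0 A (-Aᵀ) 0) (gradient H z') := by
  simpa only [conjTranspose_eq_transpose_of_trivial] using
    backward_method_well_defined_general hαmax hA hsmooth (by rwa [Real.norm_of_nonneg hη.le])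
end

section
/- Let H : ℝ^{m+n} → ℝ be convex and differentiable, A ∈ ℝ^{m×n}, and J = [[0, A],[−Aᵀ, 0]]. If the sequence (z_k) satisfies the backward method z_{k+1} = z_k − η J ∇H(z_{k+1}) with step size η > 0, then the energy is monotonically nonincreasing: H(z_{k+1}) ≤ H(z_k) for all k ≥ 0. -/
open RealInnerProductSpace Matrix

/-! Since `J` is skew-symmetric, the step `z_k - z_{k+1} = η J ∇H(z_{k+1})` is orthogonal to
`∇H(z_{k+1})`, so the tangent plane of `H` at `z_{k+1}` takes the same value at `z_k` as at
`z_{k+1}`, namely `H(z_{k+1})`. A convex function lies above its tangent planes, whence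
`H(z_{k+1}) ≤ H(z_k)`. The same works when `⟪v, J v⟫ ≥ 0`, the tangent plane then being at least
as high at `z_k`. -/

section TangentPlane

variable {E : Type*} {s : Set E} {f : E → ℝ} {x y : E}

theorem add_le_of_convexOn_of_hasFDerivWithinAt [NormedAddCommGroup E] [NormedSpace ℝ E]
    {f' : E →L[ℝ] ℝ} (hf : ConvexOn ℝ s f) (hx : x ∈ s) (hy : y ∈ s)
    (hf' : HasFDerivWithinAt f f' s x) :
    f x + f' (y - x) ≤ f y := by
  let line : ℝ →ᵃ[ℝ] E := AffineMap.lineMap x y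
  have line_zero : line 0 = x := AffineMap.lineMap_apply_zero x y
  have line_one : line 1 = y := AffineMap.lineMap_apply_one x y
  have hderiv : HasDerivWithinAt (f ∘ line) (f' (y - x)) (line ⁻¹' s) 0 :=
    hf'.comp_hasDerivWithinAt_of_eq 0 AffineMap.hasDerivWithinAt_lineMap
      (Set.mapsTo_preimage line s) line_zero.symm
  have hslope : f' (y - x) ≤ slope (f ∘ line) 0 1 :=
    (hf.comp_affineMap line).le_slope_of_hasDerivWithinAt
      (by rwa [Set.mem_preimage, line_zero]) (by rwa [Set.mem_preimage, line_one])
      zero_lt_one hderiv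
  rw [slope_def_field, Function.comp_apply, Function.comp_apply, line_zero, line_one, sub_zero,
    div_one] at hslope
  linarith

theorem add_inner_gradient_le_of_convexOn [NormedAddCommGroup E] [InnerProductSpace ℝ E]
    [CompleteSpace E] (hf : ConvexOn ℝ s f) (hx : x ∈ s) (hy : y ∈ s)
    (hdiff : DifferentiableAt ℝ f x) :
    f x + ⟪gradient f x, y - x⟫ ≤ f y :=
  add_le_of_convexOn_of_hasFDerivWithinAt hf hx hy
    hdiff.hasGradientAt.hasFDerivAt.hasFDerivWithinAt

end TangentPlane

theorem transpose_fromBlocks_zero_neg_transpose_zero {m n R : Type*} [AddGroup R]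
    (A : Matrix m n R) : (fromBlocks 0 A (-Aᵀ) 0)ᵀ = -fromBlocks 0 A (-Aᵀ) 0 := by
  simp [fromBlocks_transpose, fromBlocks_neg]

theorem inner_toEuclideanLin_self_eq_zero_s8 {ι : Type*} [Fintype ι] [DecidableEq ι]
    {M : Matrix ι ι ℝ} (hM : Mᵀ = -M) (v : EuclideanSpace ℝ ι) :
    ⟪v, toEuclideanLin M v⟫ = 0 := by
  have hadj : (toEuclideanLin M).adjoint = -toEuclideanLin M := by
    rw [← toEuclideanLin_conjTranspose_eq_adjoint, conjTranspose_eq_transpose_of_trivial, hM,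
      map_neg]
  have hneg : ⟪v, toEuclideanLin M v⟫ = -⟪v, toEuclideanLin M v⟫ := calc
    ⟪v, toEuclideanLin M v⟫ = ⟪(toEuclideanLin M).adjoint v, v⟫ :=
      (LinearMap.adjoint_inner_left _ v v).symm
    _ = -⟪v, toEuclideanLin M v⟫ := by
      rw [hadj, LinearMap.neg_apply, inner_neg_left, real_inner_comm]
  exact self_eq_neg.mp hneg

theorem backward_method_energy_decrease_general {E : Type*} [NormedAddCommGroup E]
    [InnerProductSpace ℝ E] [CompleteSpace E] {s : Set E} {H : E → ℝ} (hconv : ConvexOn ℝ s H)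
    {J : E → E} (hJ : ∀ v, 0 ≤ ⟪v, J v⟫) {η : ℝ} (hη : 0 ≤ η) {z : ℕ → E} (hzs : ∀ k, z k ∈ s)
    (hH : ∀ k, DifferentiableAt ℝ H (z (k + 1)))
    (hz : ∀ k, z (k + 1) = z k - η • J (gradient H (z (k + 1)))) (k : ℕ) :
    H (z (k + 1)) ≤ H (z k) := by
  set g := gradient H (z (k + 1))
  have hstep : z k - z (k + 1) = η • J g := by rw [sub_eq_iff_eq_add', hz k, sub_add_cancel]
  have hinner : 0 ≤ ⟪g, z k - z (k + 1)⟫ := by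
    rw [hstep, real_inner_smul_right]
    exact mul_nonneg hη (hJ g)
  calc
    H (z (k + 1)) ≤ H (z (k + 1)) + ⟪g, z k - z (k + 1)⟫ := le_add_of_nonneg_right hinner
    _ ≤ H (z k) := add_inner_gradient_le_of_convexOn hconv (hzs (k + 1)) (hzs k) (hH k)

/-- **The backward discretization of the skew-gradient flow decreases a convex energy.**
If `H` is convex and differentiable and `z_{k+1} = z_k − η J ∇H(z_{k+1})` with
`J = [[0, A], [−Aᵀ, 0]]`, then `H(z_{k+1}) ≤ H(z_k)` for all `k`. -/
theorem backward_method_energy_decrease {m n : ℕ} (A : Matrix (Fin m) (Fin n) ℝ)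
    (H : EuclideanSpace ℝ (Fin m ⊕ Fin n) → ℝ)
    (hH : Differentiable ℝ H) (hconv : ConvexOn ℝ Set.univ H)
    (η : ℝ) (hη : 0 < η)
    (z : ℕ → EuclideanSpace ℝ (Fin m ⊕ Fin n))
    (hz : ∀ k, z (k+1) = z k -
      η • Matrix.toEuclideanLin (Matrix.fromBlocks 0 A (-Aᵀ) 0) (gradient H (z (k+1)))) :
    ∀ k, H (z (k+1)) ≤ H (z k) :=
  have hskew := transpose_fromBlocks_zero_neg_transpose_zero A
  backward_method_energy_decrease_general hconv
    (fun v ↦ (inner_toEuclideanLin_self_eq_zero_s8 hskew v).ge) hη.le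
    (fun k ↦ Set.mem_univ (z k)) (fun k ↦ hH (z (k + 1))) hz
end

section
/- Let f : ℝ^m → ℝ be differentiable. If the Bregman divergence of f is symmetric, i.e. D_f(x', x) = D_f(x, x') for all x, x' ∈ ℝ^m (equivalently, the Bregman commutator C_f vanishes identically), then f is a quadratic function: there exist a linear map L : ℝ^m → ℝ^m, a vector b ∈ ℝ^m, and a constant c ∈ ℝ such that f(x) = (1/2)⟨x, L x⟩ + ⟨b, x⟩ + c for all x. -/
open RealInnerProductSpace

/-- The Bregman divergence `D_f(x', x) = f(x') − f(x) − ⟨∇f(x), x' − x⟩`. -/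
noncomputable def bregman {m : ℕ} (f : EuclideanSpace ℝ (Fin m) → ℝ)
    (x' x : EuclideanSpace ℝ (Fin m)) : ℝ :=
  f x' - f x - ⟪gradient f x, x' - x⟫

/-!
Symmetry of the divergence reads `2 (f y - f x) = ⟨v x + v y, y - x⟩` with `v = ∇f`. Comparing this
with its instances at `(0, x)` and `(0, y)` eliminates `f` and leaves
`⟨v x - v 0, y⟩ = ⟨v y - v 0, x⟩`. A map that is its own formal adjoint for a nondegenerate pairing
is linear, so `L x = v x - v 0` is linear, and the instance at `(0, x)` is the formula for `f`.
-/

section PairingComm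

variable {R E F N : Type*} [CommSemiring R] [AddCommMonoid E] [Module R E] [AddCommMonoid F]
  [Module R F] [AddCommMonoid N] [Module R N] {B : F →ₗ[R] E →ₗ[R] N} {A : E → F}

theorem isLinearMap_of_pairing_comm (hB : Function.Injective B)
    (hA : ∀ x y, B (A x) y = B (A y) x) : IsLinearMap R A where
  map_add x y := hB <| LinearMap.ext fun z => by
    simp only [map_add, LinearMap.add_apply, hA _ z]
  map_smul r x := hB <| LinearMap.ext fun z => by
    simp only [map_smul, LinearMap.smul_apply, hA _ z]

end PairingComm

section PairingBregman

variable {R E F N : Type*} [CommRing R] [AddCommGroup E] [Module R E] [AddCommGroup F]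
  [Module R F] [AddCommGroup N] [Module R N]

/-- The Bregman divergence of `f` in which the pairing `B` replaces the inner product and an
arbitrary map `v` replaces the gradient; for instance, `v` may select subgradients of a convex
function, or `B` may be the evaluation pairing of the dual space and `v` the derivative. -/
def pairingBregman (B : F →ₗ[R] E →ₗ[R] N) (f : E → N) (v : E → F) (x' x : E) : N :=
  f x' - f x - B (v x) (x' - x)

variable {B : F →ₗ[R] E →ₗ[R] N} {f : E → N} {v : E → F}

theorem pairingBregman_comm_iff {x y : E} :
    pairingBregman B f v y x = pairingBregman B f v x y ↔
      (2 : R) • (f y - f x) = B (v x + v y) (y - x) := by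
  simp only [pairingBregman, map_add, map_sub, LinearMap.add_apply]
  constructor <;> intro h <;> linear_combination (norm := module) h

theorem two_smul_sub_zero_of_pairingBregman_comm
    (hsymm : ∀ x y, pairingBregman B f v y x = pairingBregman B f v x y) (x : E) :
    (2 : R) • (f x - f 0) = B (v x - v 0) x + (2 : R) • B (v 0) x := by
  have h := pairingBregman_comm_iff.1 (hsymm 0 x)
  simp only [map_add, map_sub, LinearMap.add_apply, LinearMap.sub_apply, sub_zero] at h ⊢
  linear_combination (norm := module) h

theorem pairing_sub_zero_comm_of_pairingBregman_comm
    (hsymm : ∀ x y, pairingBregman B f v y x = pairingBregman B f v x y) (x y : E) :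
    B (v x - v 0) y = B (v y - v 0) x := by
  have hx := two_smul_sub_zero_of_pairingBregman_comm hsymm x
  have hy := two_smul_sub_zero_of_pairingBregman_comm hsymm y
  have hxy := pairingBregman_comm_iff.1 (hsymm x y)
  simp only [map_add, map_sub, LinearMap.add_apply, LinearMap.sub_apply] at hx hy hxy ⊢
  linear_combination (norm := module) hy - hx - hxy

theorem quadratic_of_symmetric_bregman_general [Invertible (2 : R)] (hB : Function.Injective B)
    (hsymm : ∀ x x', pairingBregman B f v x' x = pairingBregman B f v x x') :
    ∃ (L : E →ₗ[R] F) (b : F) (c : N), ∀ x, f x = ⅟(2 : R) • B (L x) x + B b x + c := by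
  have hlin : IsLinearMap R fun x => v x - v 0 :=
    isLinearMap_of_pairing_comm hB (pairing_sub_zero_comm_of_pairingBregman_comm hsymm)
  refine ⟨hlin.mk' _, v 0, f 0, fun x => ?_⟩
  calc f x = ⅟(2 : R) • (2 : R) • (f x - f 0) + f 0 := by
        rw [invOf_smul_smul, sub_add_cancel]
    _ = ⅟(2 : R) • (B (v x - v 0) x + (2 : R) • B (v 0) x) + f 0 := by
        rw [two_smul_sub_zero_of_pairingBregman_comm hsymm]
    _ = ⅟(2 : R) • B (hlin.mk' _ x) x + B (v 0) x + f 0 := by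
        rw [smul_add, invOf_smul_smul, IsLinearMap.mk'_apply]

end PairingBregman

theorem innerₗ_injective (E : Type*) [NormedAddCommGroup E] [InnerProductSpace ℝ E] :
    Function.Injective (innerₗ E) :=
  fun _ _ h => ext_inner_right ℝ fun z => LinearMap.congr_fun h z

/-- **A vanishing Bregman commutator forces the function to be quadratic.**
If the Bregman divergence of a differentiable `f : ℝ^m → ℝ` is symmetric (equivalently, the
Bregman commutator vanishes identically), then `f` is a quadratic function:
`f(x) = (1/2)⟨x, L x⟩ + ⟨b, x⟩ + c` for a linear map `L`, a vector `b` and a constant `c`. -/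
theorem quadratic_of_symmetric_bregman {m : ℕ}
    (f : EuclideanSpace ℝ (Fin m) → ℝ) (hf : Differentiable ℝ f)
    (hsymm : ∀ x x' : EuclideanSpace ℝ (Fin m), bregman f x' x = bregman f x x') :
    ∃ (L : EuclideanSpace ℝ (Fin m) →ₗ[ℝ] EuclideanSpace ℝ (Fin m))
      (b : EuclideanSpace ℝ (Fin m)) (c : ℝ),
      ∀ x, f x = (1/2) * ⟪x, L x⟫ + ⟪b, x⟫ + c := by
  obtain ⟨L, b, c, hquad⟩ :=
    quadratic_of_symmetric_bregman_general (v := gradient f) (innerₗ_injective _) hsymm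
  exact ⟨L, b, c, fun x => by simpa [real_inner_comm x] using hquad x⟩
end

section
/- Let ‖·‖ be a norm on ℝ^m and let f : ℝ^m → ℝ be three-times differentiable with ‖∇³f(x)‖_op ≤ M for all x (i.e., |∇³f(x)[v,v,v]| ≤ M ‖v‖³ for all x, v). Then the Bregman commutator satisfies |C_f(x', x)| ≤ (M/12) ‖x' − x‖³ for all x, x' ∈ ℝ^m. -/
/-! Along the segment from `x` to `x'`, the Bregman commutator of `f` is the error of the one-panel
trapezoidal rule for the integral of the derivative of `g t = f (x + t (x' - x))` over `[0, 1]`.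
Replacing the right endpoint by a variable `t`, the error and its first derivative vanish at
`t = 0`, and its second derivative is `-(t / 2) g''' t`; integrating the bound on `g'''` twice
gives the constant `1 / 12`. -/

open Set AffineMap

section Trapezoid

variable {F : Type*} [NormedAddCommGroup F] [NormedSpace ℝ F] {a b C : ℝ}

theorem norm_le_mul_pow_succ_of_norm_deriv_le_mul_pow {φ φ' : ℝ → F} {n : ℕ} (ha : φ a = 0)
    (hφ : ∀ t ∈ Icc a b, HasDerivWithinAt φ (φ' t) (Icc a b) t)
    (bound : ∀ t ∈ Icc a b, ‖φ' t‖ ≤ C * (t - a) ^ n) :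
    ∀ t ∈ Icc a b, ‖φ t‖ ≤ C / (n + 1) * (t - a) ^ (n + 1) := by
  have hB (t : ℝ) :
      HasDerivAt (fun s ↦ C / (n + 1) * (s - a) ^ (n + 1)) (C * (t - a) ^ n) t := by
    refine ((((hasDerivAt_id t).sub_const a).pow (n + 1)).const_mul (C / (n + 1))).congr_deriv ?_
    simp [field]
  exact image_norm_le_of_norm_deriv_right_le_deriv_boundary
    (fun t ht ↦ (hφ t ht).continuousWithinAt)
    (fun t ht ↦ (hφ t (Ico_subset_Icc_self ht)).mono_of_mem_nhdsWithin (Icc_mem_nhdsGE_of_mem ht))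
    (by simp [ha]) hB (fun t ht ↦ bound t (Ico_subset_Icc_self ht))

variable {g g' g'' g''' : ℝ → F} {s : Set ℝ} {t : ℝ}

theorem hasDerivWithinAt_trapezoid_error (hg : HasDerivWithinAt g (g' t) s t)
    (hg' : HasDerivWithinAt g' (g'' t) s t) :
    HasDerivWithinAt (fun t ↦ g t - g a - ((t - a) / 2) • (g' t + g' a))
      ((1 / 2 : ℝ) • (g' t - g' a) - ((t - a) / 2) • g'' t) s t := by
  have hweight : HasDerivWithinAt (fun t ↦ (t - a) / 2) (1 / 2) s t :=
    ((hasDerivWithinAt_id t s).sub_const a).div_const 2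
  refine ((hg.sub_const (g a)).sub (hweight.smul (hg'.add_const (g' a)))).congr_deriv ?_
  module

theorem hasDerivWithinAt_deriv_trapezoid_error (hg' : HasDerivWithinAt g' (g'' t) s t)
    (hg'' : HasDerivWithinAt g'' (g''' t) s t) :
    HasDerivWithinAt (fun t ↦ (1 / 2 : ℝ) • (g' t - g' a) - ((t - a) / 2) • g'' t)
      (-((t - a) / 2) • g''' t) s t := by
  have hweight : HasDerivWithinAt (fun t ↦ (t - a) / 2) (1 / 2) s t :=
    ((hasDerivWithinAt_id t s).sub_const a).div_const 2
  refine (((hg'.sub_const (g' a)).const_smul (1 / 2 : ℝ)).sub (hweight.smul hg'')).congr_deriv ?_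
  module

theorem norm_trapezoid_error_le (hab : a ≤ b)
    (hg : ∀ t ∈ Icc a b, HasDerivWithinAt g (g' t) (Icc a b) t)
    (hg' : ∀ t ∈ Icc a b, HasDerivWithinAt g' (g'' t) (Icc a b) t)
    (hg'' : ∀ t ∈ Icc a b, HasDerivWithinAt g'' (g''' t) (Icc a b) t)
    (bound : ∀ t ∈ Icc a b, ‖g''' t‖ ≤ C) :
    ‖g b - g a - ((b - a) / 2) • (g' b + g' a)‖ ≤ C / 12 * (b - a) ^ 3 := by
  have hsecond : ∀ t ∈ Icc a b, ‖-((t - a) / 2) • g''' t‖ ≤ C / 2 * (t - a) ^ 1 := by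
    intro t ht
    have hta : 0 ≤ (t - a) / 2 := by linarith [ht.1]
    calc ‖-((t - a) / 2) • g''' t‖ = (t - a) / 2 * ‖g''' t‖ := by
          rw [norm_smul, norm_neg, Real.norm_of_nonneg hta]
      _ ≤ (t - a) / 2 * C := mul_le_mul_of_nonneg_left (bound t ht) hta
      _ = C / 2 * (t - a) ^ 1 := by ring
  have hfirst := norm_le_mul_pow_succ_of_norm_deriv_le_mul_pow (by simp)
    (fun t ht ↦ hasDerivWithinAt_deriv_trapezoid_error (a := a) (hg' t ht) (hg'' t ht)) hsecond
  have herror := norm_le_mul_pow_succ_of_norm_deriv_le_mul_pow (by simp)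
    (fun t ht ↦ hasDerivWithinAt_trapezoid_error (a := a) (hg t ht) (hg' t ht)) hfirst
  exact (herror b (right_mem_Icc.2 hab)).trans_eq (by push_cast; ring)

end Trapezoid

theorem hasDerivAt_iteratedFDeriv_lineMap {𝕜 E F : Type*} [NontriviallyNormedField 𝕜]
    [NormedAddCommGroup E] [NormedSpace 𝕜 E] [NormedAddCommGroup F] [NormedSpace 𝕜 F]
    {f : E → F} {x y : E} {n : ℕ} {t : 𝕜}
    (hf : DifferentiableAt 𝕜 (iteratedFDeriv 𝕜 n f) (lineMap x y t)) :
    HasDerivAt (fun t : 𝕜 ↦ iteratedFDeriv 𝕜 n f (lineMap x y t) fun _ ↦ y - x)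
      (iteratedFDeriv 𝕜 (n + 1) f (lineMap x y t) fun _ ↦ y - x) t :=
  (ContinuousMultilinearMap.apply 𝕜 (fun _ : Fin n ↦ E) F fun _ ↦ y - x).hasFDerivAt.comp_hasDerivAt
    t (hf.hasFDerivAt.comp_hasDerivAt t hasDerivAt_lineMap)

theorem bregman_commutator_bound_general {E F : Type*} [NormedAddCommGroup E] [NormedSpace ℝ E]
    [NormedAddCommGroup F] [NormedSpace ℝ F] {f : E → F} {M : ℝ} {x x' : E}
    (hf : ∀ k < 3, ∀ z ∈ segment ℝ x x', DifferentiableAt ℝ (iteratedFDeriv ℝ k f) z)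
    (hM : ∀ z ∈ segment ℝ x x',
      ‖iteratedFDeriv ℝ 3 f z (fun _ ↦ x' - x)‖ ≤ M * ‖x' - x‖ ^ 3) :
    ‖f x' - f x - (1 / 2 : ℝ) • (fderiv ℝ f x' (x' - x) + fderiv ℝ f x (x' - x))‖ ≤
      M / 12 * ‖x' - x‖ ^ 3 := by
  let g (k : ℕ) (t : ℝ) : F := iteratedFDeriv ℝ k f (lineMap x x' t) fun _ ↦ x' - x
  have hline : ∀ t ∈ Icc (0 : ℝ) 1, lineMap x x' t ∈ segment ℝ x x' := fun t ht ↦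
    segment_eq_image_lineMap ℝ x x' ▸ mem_image_of_mem _ ht
  have hderiv : ∀ k < 3, ∀ t ∈ Icc (0 : ℝ) 1,
      HasDerivWithinAt (g k) (g (k + 1) t) (Icc 0 1) t := fun k hk t ht ↦
    (hasDerivAt_iteratedFDeriv_lineMap (hf k hk _ (hline t ht))).hasDerivWithinAt
  have hbound : ‖g 0 1 - g 0 0 - ((1 - 0) / 2 : ℝ) • (g 1 1 + g 1 0)‖ ≤
      M * ‖x' - x‖ ^ 3 / 12 * (1 - 0) ^ 3 :=
    norm_trapezoid_error_le zero_le_one (hderiv 0 (by norm_num)) (hderiv 1 (by norm_num))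
      (hderiv 2 (by norm_num)) fun t ht ↦ hM _ (hline t ht)
  simp only [g, iteratedFDeriv_zero_apply, iteratedFDeriv_one_apply, lineMap_apply_zero,
    lineMap_apply_one, sub_zero, one_pow, mul_one] at hbound
  exact hbound.trans_eq (by ring)

/-- **Bound on the Bregman commutator under third-order smoothness.**
Let `f` be a three-times continuously differentiable real-valued function on a real normed
space with `|∇³f(x)[v,v,v]| ≤ M ‖v‖³` for all `x, v`. Then the Bregman commutator
`C_f(x', x) = f(x') − f(x) − (1/2)⟨∇f(x') + ∇f(x), x' − x⟩` satisfies
`|C_f(x', x)| ≤ (M/12) ‖x' − x‖³`. -/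
theorem bregman_commutator_bound {E : Type*} [NormedAddCommGroup E] [NormedSpace ℝ E]
    [FiniteDimensional ℝ E]
    (f : E → ℝ) (M : ℝ) (hf : ContDiff ℝ 3 f)
    (hM : ∀ (x v : E), |iteratedFDeriv ℝ 3 f x (fun _ => v)| ≤ M * ‖v‖ ^ 3) :
    ∀ x x' : E,
      |f x' - f x - (1/2) * (fderiv ℝ f x' (x' - x) + fderiv ℝ f x (x' - x))| ≤
        M / 12 * ‖x' - x‖ ^ 3 := by
  exact fun x x' ↦ bregman_commutator_bound_general
    (fun _ hk z _ ↦ hf.differentiable_iteratedFDeriv (mod_cast hk) z) (fun z _ ↦ hM z (x' - x))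
end

section
/- Let f : ℝ^m → ℝ and g : ℝ^n → ℝ be differentiable, A ∈ ℝ^{m×n}, η > 0, and let z_k = (x_k, y_k) evolve following the alternating method x_{k+1} = x_k − η A ∇g(y_k), y_{k+1} = y_k + η Aᵀ ∇f(x_{k+1}). Then for every k ≥ 0, the modified energy H_η(x,y) = f(x) + g(y) − (η/2)⟨∇f(x), A ∇g(y)⟩ changes by exactly the Bregman commutator: H_η(z_{k+1}) = H_η(z_k) + C_H(z_{k+1}, z_k), where C_H(z', z) = C_f(x', x) + C_g(y', y). -/
open RealInnerProductSpace Matrix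

/-- The Bregman commutator `C_f(x', x) = f(x') − f(x) − (1/2)⟨∇f(x') + ∇f(x), x' − x⟩`. -/
noncomputable def bregmanCommutator {m : ℕ} (f : EuclideanSpace ℝ (Fin m) → ℝ)
    (x' x : EuclideanSpace ℝ (Fin m)) : ℝ :=
  f x' - f x - (1/2) * ⟪gradient f x' + gradient f x, x' - x⟫

/-- The modified energy `H_η(x, y) = f(x) + g(y) − (η/2)⟨∇f(x), A ∇g(y)⟩`. -/
noncomputable def modifiedEnergy {m n : ℕ} (f : EuclideanSpace ℝ (Fin m) → ℝ)
    (g : EuclideanSpace ℝ (Fin n) → ℝ) (A : Matrix (Fin m) (Fin n) ℝ) (η : ℝ)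
    (x : EuclideanSpace ℝ (Fin m)) (y : EuclideanSpace ℝ (Fin n)) : ℝ :=
  f x + g y - η / 2 * ⟪gradient f x, Matrix.toEuclideanLin A (gradient g y)⟫

section Hilbert

variable {E F : Type*}
  [NormedAddCommGroup E] [InnerProductSpace ℝ E] [CompleteSpace E]
  [NormedAddCommGroup F] [InnerProductSpace ℝ F] [CompleteSpace F]

/-- The Bregman commutator of a function on a real Hilbert space, i.e. the error of the trapezoidal
rule for `f x' - f x`; for Euclidean spaces it unfolds to `bregmanCommutator`. -/
noncomputable def hilbertBregmanCommutator (f : E → ℝ) (x' x : E) : ℝ :=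
  f x' - f x - (1 / 2) * ⟪gradient f x' + gradient f x, x' - x⟫

/-- The modified energy of `f x + g y` on a product of real Hilbert spaces, with the coupling matrix
replaced by a bounded operator; for the operator of a matrix it unfolds to `modifiedEnergy`. -/
noncomputable def hilbertModifiedEnergy (f : E → ℝ) (g : F → ℝ) (A : F →L[ℝ] E) (η : ℝ)
    (x : E) (y : F) : ℝ :=
  f x + g y - η / 2 * ⟪gradient f x, A (gradient g y)⟫

-- The `x`-step uses the old `q` and the `y`-step the new `p'`, so both produce the mixed term
-- `⟪p', A q⟫`, with opposite signs.
lemma inner_add_neg_smul_add_inner_add_smul_adjoint (A : F →L[ℝ] E) (η : ℝ) (p p' : E) (q q' : F) :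
    ⟪p' + p, -(η • A q)⟫ + ⟪q' + q, η • A.adjoint p'⟫ = η * (⟪p', A q'⟫ - ⟪p, A q⟫) := by
  have adjoint_swap (v : F) : ⟪v, A.adjoint p'⟫ = ⟪p', A v⟫ := by
    rw [A.adjoint_inner_right, real_inner_comm]
  simp only [inner_add_left, inner_neg_right, real_inner_smul_right, adjoint_swap]
  ring

theorem modifiedEnergy_change_alternating_general {f : E → ℝ} {g : F → ℝ} (A : F →L[ℝ] E) (η : ℝ)
    {x x' p p' : E} {y y' q q' : F}
    (hfx : HasGradientAt f p x) (hfx' : HasGradientAt f p' x')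
    (hgy : HasGradientAt g q y) (hgy' : HasGradientAt g q' y')
    (hx : x' = x - η • A q) (hy : y' = y + η • A.adjoint p') :
    hilbertModifiedEnergy f g A η x' y' = hilbertModifiedEnergy f g A η x y +
      (hilbertBregmanCommutator f x' x + hilbertBregmanCommutator g y' y) := by
  have x_increment : x' - x = -(η • A q) := by rw [hx]; abel
  have y_increment : y' - y = η • A.adjoint p' := by rw [hy]; abel
  have trapezoid_sum := inner_add_neg_smul_add_inner_add_smul_adjoint A η p p' q q'
  simp only [hilbertModifiedEnergy, hilbertBregmanCommutator, hfx.gradient, hfx'.gradient,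
    hgy.gradient, hgy'.gradient, x_increment, y_increment]
  linarith

end Hilbert

lemma adjoint_toContinuousLinearMap_toEuclideanLin {𝕜 m n : Type*} [RCLike 𝕜] [Fintype m]
    [Fintype n] [DecidableEq m] [DecidableEq n] (A : Matrix m n 𝕜) :
    (toEuclideanLin A).toContinuousLinearMap.adjoint =
      (toEuclideanLin Aᴴ).toContinuousLinearMap := by
  rw [← LinearMap.adjoint_toContinuousLinearMap, ← toEuclideanLin_conjTranspose_eq_adjoint]

/-- **Change of the modified energy along the alternating method.**
Along `x_{k+1} = x_k − η A ∇g(y_k)`, `y_{k+1} = y_k + η Aᵀ ∇f(x_{k+1})`, the modified energy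
changes by exactly the Bregman commutator:
`H_η(z_{k+1}) = H_η(z_k) + C_H(z_{k+1}, z_k)` with `C_H(z', z) = C_f(x', x) + C_g(y', y)`. -/
theorem modifiedEnergy_change_alternating {m n : ℕ}
    (f : EuclideanSpace ℝ (Fin m) → ℝ) (g : EuclideanSpace ℝ (Fin n) → ℝ)
    (hf : Differentiable ℝ f) (hg : Differentiable ℝ g)
    (A : Matrix (Fin m) (Fin n) ℝ) (η : ℝ) (hη : 0 < η)
    (x : ℕ → EuclideanSpace ℝ (Fin m)) (y : ℕ → EuclideanSpace ℝ (Fin n))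
    (hx : ∀ k, x (k+1) = x k - η • Matrix.toEuclideanLin A (gradient g (y k)))
    (hy : ∀ k, y (k+1) = y k + η • Matrix.toEuclideanLin Aᵀ (gradient f (x (k+1)))) :
    ∀ k : ℕ, modifiedEnergy f g A η (x (k+1)) (y (k+1)) =
      modifiedEnergy f g A η (x k) (y k) +
        (bregmanCommutator f (x (k+1)) (x k) + bregmanCommutator g (y (k+1)) (y k)) := by
  intro k
  have hy' : y (k + 1) = y k +
      η • (toEuclideanLin A).toContinuousLinearMap.adjoint (gradient f (x (k + 1))) := by
    rw [adjoint_toContinuousLinearMap_toEuclideanLin, conjTranspose_eq_transpose_of_trivial]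
    exact hy k
  exact modifiedEnergy_change_alternating_general (toEuclideanLin A).toContinuousLinearMap η
    (hf _).hasGradientAt (hf _).hasGradientAt (hg _).hasGradientAt (hg _).hasGradientAt (hx k) hy'
end

section
/- Let f : ℝ^m → ℝ and g : ℝ^n → ℝ be differentiable convex functions and A ∈ ℝ^{m×n}. Let (x_k, y_k) satisfy the simultaneous backward method x_{k+1} = x_k − η A ∇g(y_{k+1}), y_{k+1} = y_k + η Aᵀ ∇f(x_{k+1}) with step size η > 0, and set p_k = ∇f(x_k), q_k = ∇g(y_k). For arbitrary x̂, ŷ set p̂ = ∇f(x̂), q̂ = ∇g(ŷ), and assume D_f(x₀, x̂) ≤ M, D_g(y₀, ŷ) ≤ M for some 0 < M < ∞. Then the cumulative regret R_K(p̂, q̂) = Σ_{k=0}^{K-1} p_{k+1}ᵀ A q̂ − Σ_{k=0}^{K-1} p̂ᵀ A q_{k+1} satisfies R_K(p̂, q̂) ≤ 2M/η for every K ≥ 1. -/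
open RealInnerProductSpace Matrix

/-!
The energy `E k = D_f(x_k, x̂) + D_g(y_k, ŷ)` pays for the regret. By the three-point identity for
Bregman divergences, one backward step decreases `E` by exactly `η` times the regret incurred in
that step plus `D_f(x_k, x_{k+1}) + D_g(y_k, y_{k+1})`: both gradients in the update
are taken at the new point, and `A` and its adjoint enter with opposite signs, so the cross terms
`⟨∇f(x_{k+1}), A ∇g(y_{k+1})⟩` cancel.
Convexity makes all divergences nonnegative, so telescoping bounds `η R_K` by `E 0 - E K ≤ E 0`.
-/

section FirstOrder

variable {E : Type*} [NormedAddCommGroup E] [NormedSpace ℝ E] {f : E → ℝ} {s : Set E} {x x' : E}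

theorem hasFDerivAt_apply_sub_le_of_convexOn {f' : E →L[ℝ] ℝ} (hfc : ConvexOn ℝ s f)
    (hx : x ∈ s) (hx' : x' ∈ s) (hf : HasFDerivAt f f' x) :
    f' (x' - x) ≤ f x' - f x := by
  let line : ℝ →ᵃ[ℝ] E := AffineMap.lineMap x x'
  have convex_on_line : ConvexOn ℝ (line ⁻¹' s) (f ∘ line) := hfc.comp_affineMap line
  have deriv_at_zero : HasDerivAt (f ∘ line) (f' (x' - x)) 0 :=
    HasFDerivAt.comp_hasDerivAt 0 (by simpa [line] using hf) AffineMap.hasDerivAt_lineMap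
  simpa [line, slope_def_field] using
    convex_on_line.le_slope_of_hasDerivAt (by simpa [line] using hx) (by simpa [line] using hx')
      one_pos deriv_at_zero

end FirstOrder

section BregmanDivergence

variable {E : Type*} [NormedAddCommGroup E] [InnerProductSpace ℝ E] [CompleteSpace E]
  {f : E → ℝ} {s : Set E} {x x' : E}

/-- The Bregman divergence of a function on a real Hilbert space; `bregman` is its restriction to
Euclidean spaces. It is meaningful only where `f` is differentiable at the second argument, since
`gradient` is `0` elsewhere. -/
noncomputable def bregmanDiv (f : E → ℝ) (x' x : E) : ℝ :=
  f x' - f x - ⟪gradient f x, x' - x⟫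

theorem bregmanDiv_nonneg (hfc : ConvexOn ℝ s f) (hx : x ∈ s) (hx' : x' ∈ s)
    (hf : DifferentiableAt ℝ f x) : 0 ≤ bregmanDiv f x' x := by
  rw [bregmanDiv, inner_gradient_left, sub_nonneg]
  exact hasFDerivAt_apply_sub_le_of_convexOn hfc hx hx' hf.hasFDerivAt

theorem bregmanDiv_three_point (f : E → ℝ) (x z w : E) :
    bregmanDiv f x w =
      bregmanDiv f z w + bregmanDiv f x z + ⟪gradient f z - gradient f w, x - z⟫ := by
  simp only [bregmanDiv, inner_sub_left, inner_sub_right]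
  ring

end BregmanDivergence

section BackwardMethod

variable {E F : Type*} [NormedAddCommGroup E] [InnerProductSpace ℝ E] [CompleteSpace E]
  [NormedAddCommGroup F] [InnerProductSpace ℝ F] [CompleteSpace F]
  {f : E → ℝ} {g : F → ℝ} {A : F →L[ℝ] E} {η : ℝ}

theorem bregmanDiv_add_bregmanDiv_backward_step {x x' : E} {y y' : F}
    (hx : x' = x - η • A (gradient g y'))
    (hy : y' = y + η • ContinuousLinearMap.adjoint A (gradient f x')) (xh : E) (yh : F) :
    bregmanDiv f x xh + bregmanDiv g y yh =
      bregmanDiv f x' xh + bregmanDiv g y' yh + (bregmanDiv f x x' + bregmanDiv g y y') +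
        η * (⟪gradient f x', A (gradient g yh)⟫ - ⟪gradient f xh, A (gradient g y')⟫) := by
  have x_displacement : x - x' = η • A (gradient g y') := by
    nth_rw 1 [hx]
    exact sub_sub_cancel _ _
  have y_displacement : y - y' = -(η • ContinuousLinearMap.adjoint A (gradient f x')) := by
    nth_rw 1 [hy]
    exact sub_add_cancel_left _ _
  have adjoint_pairing (q : F) :
      ⟪q, ContinuousLinearMap.adjoint A (gradient f x')⟫ = ⟪gradient f x', A q⟫ := by
    rw [ContinuousLinearMap.adjoint_inner_right, real_inner_comm]
  rw [bregmanDiv_three_point f x x' xh, bregmanDiv_three_point g y y' yh, x_displacement,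
    y_displacement]
  simp only [inner_neg_right, real_inner_smul_right, inner_sub_left, adjoint_pairing]
  ring

theorem mul_regret_backward_step_le (hf : Differentiable ℝ f) (hg : Differentiable ℝ g)
    (hfc : ConvexOn ℝ Set.univ f) (hgc : ConvexOn ℝ Set.univ g) {x x' : E} {y y' : F}
    (hx : x' = x - η • A (gradient g y'))
    (hy : y' = y + η • ContinuousLinearMap.adjoint A (gradient f x')) (xh : E) (yh : F) :
    η * (⟪gradient f x', A (gradient g yh)⟫ - ⟪gradient f xh, A (gradient g y')⟫) ≤
      (bregmanDiv f x xh + bregmanDiv g y yh) - (bregmanDiv f x' xh + bregmanDiv g y' yh) := by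
  have energy_balance := bregmanDiv_add_bregmanDiv_backward_step hx hy xh yh
  have f_nonneg : 0 ≤ bregmanDiv f x x' :=
    bregmanDiv_nonneg hfc (Set.mem_univ _) (Set.mem_univ _) (hf x')
  have g_nonneg : 0 ≤ bregmanDiv g y y' :=
    bregmanDiv_nonneg hgc (Set.mem_univ _) (Set.mem_univ _) (hg y')
  linarith

theorem backward_method_regret_bound_general (hf : Differentiable ℝ f) (hg : Differentiable ℝ g)
    (hfc : ConvexOn ℝ Set.univ f) (hgc : ConvexOn ℝ Set.univ g) (hη : 0 < η)
    {x : ℕ → E} {y : ℕ → F}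
    (hx : ∀ k, x (k + 1) = x k - η • A (gradient g (y (k + 1))))
    (hy : ∀ k, y (k + 1) = y k + η • ContinuousLinearMap.adjoint A (gradient f (x (k + 1))))
    (xh : E) (yh : F) (K : ℕ) :
    ∑ k ∈ Finset.range K, ⟪gradient f (x (k + 1)), A (gradient g yh)⟫ -
      ∑ k ∈ Finset.range K, ⟪gradient f xh, A (gradient g (y (k + 1)))⟫ ≤
    (bregmanDiv f (x 0) xh + bregmanDiv g (y 0) yh) / η := by
  let energy (k : ℕ) : ℝ := bregmanDiv f (x k) xh + bregmanDiv g (y k) yh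
  have energy_nonneg : 0 ≤ energy K :=
    add_nonneg (bregmanDiv_nonneg hfc (Set.mem_univ _) (Set.mem_univ _) (hf xh))
      (bregmanDiv_nonneg hgc (Set.mem_univ _) (Set.mem_univ _) (hg yh))
  rw [le_div_iff₀' hη, ← Finset.sum_sub_distrib, Finset.mul_sum]
  calc ∑ k ∈ Finset.range K, η * (⟪gradient f (x (k + 1)), A (gradient g yh)⟫ -
          ⟪gradient f xh, A (gradient g (y (k + 1)))⟫)
      ≤ ∑ k ∈ Finset.range K, (energy k - energy (k + 1)) :=
        Finset.sum_le_sum fun k _ ↦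
          mul_regret_backward_step_le hf hg hfc hgc (hx k) (hy k) xh yh
    _ = energy 0 - energy K := Finset.sum_range_sub' energy K
    _ ≤ energy 0 := sub_le_self _ energy_nonneg

end BackwardMethod

theorem toEuclideanLin_transpose_eq_adjoint {m n : Type*} [Fintype m] [Fintype n] [DecidableEq m]
    [DecidableEq n] (A : Matrix m n ℝ) :
    Matrix.toEuclideanLin Aᵀ =
      ContinuousLinearMap.adjoint (LinearMap.toContinuousLinearMap (Matrix.toEuclideanLin A)) := by
  rw [← Matrix.conjTranspose_eq_transpose_of_trivial,
    Matrix.toEuclideanLin_conjTranspose_eq_adjoint, LinearMap.adjoint_eq_toCLM_adjoint]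

/-- **Constant regret of the simultaneous backward method (proximal mirror descent).**
Along the implicit update `x_{k+1} = x_k − η A ∇g(y_{k+1})`, `y_{k+1} = y_k + η Aᵀ ∇f(x_{k+1})`,
the cumulative regret with respect to `(p̂, q̂) = (∇f(x̂), ∇g(ŷ))` satisfies
`R_K(p̂, q̂) ≤ 2M/η` for every `K ≥ 1`. -/
theorem backward_method_regret_bound {m n : ℕ}
    (f : EuclideanSpace ℝ (Fin m) → ℝ) (g : EuclideanSpace ℝ (Fin n) → ℝ)
    (hf : Differentiable ℝ f) (hg : Differentiable ℝ g)
    (hfc : ConvexOn ℝ Set.univ f) (hgc : ConvexOn ℝ Set.univ g)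
    (A : Matrix (Fin m) (Fin n) ℝ)
    (η : ℝ) (hη : 0 < η)
    (x : ℕ → EuclideanSpace ℝ (Fin m)) (y : ℕ → EuclideanSpace ℝ (Fin n))
    (hx : ∀ k, x (k+1) = x k - η • Matrix.toEuclideanLin A (gradient g (y (k+1))))
    (hy : ∀ k, y (k+1) = y k + η • Matrix.toEuclideanLin Aᵀ (gradient f (x (k+1))))
    (xh : EuclideanSpace ℝ (Fin m)) (yh : EuclideanSpace ℝ (Fin n))
    (M : ℝ) (hM : 0 < M)
    (hMf : bregman f (x 0) xh ≤ M) (hMg : bregman g (y 0) yh ≤ M)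
    (K : ℕ) (hK : 1 ≤ K) :
    ∑ k ∈ Finset.range K, ⟪gradient f (x (k+1)), Matrix.toEuclideanLin A (gradient g yh)⟫ -
      ∑ k ∈ Finset.range K, ⟪gradient f xh, Matrix.toEuclideanLin A (gradient g (y (k+1)))⟫ ≤
    2 * M / η := by
  simp only [toEuclideanLin_transpose_eq_adjoint] at hy
  calc _ ≤ (bregman f (x 0) xh + bregman g (y 0) yh) / η :=
        backward_method_regret_bound_general
          (A := LinearMap.toContinuousLinearMap (Matrix.toEuclideanLin A))
          hf hg hfc hgc hη hx hy xh yh K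
    _ ≤ 2 * M / η := by gcongr; linarith
end
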